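/- For any p, q ∈ P_n with greatest lower bound z = p ∧ q = (z_1,…,z_n), there exists a coupling M ∈ C(p,q) whose nonzero entries can be partitioned into n pairs {z_j^{(r)}, z_j^{(d)}} with z_j^{(r)} + z_j^{(d)} = z_j for j = 1,…,n. In particular, there exists a coupling of p and q with at most 2n nonzero entries satisfying H(M) ≤ H(p ∧ q) + 1. -/

import Mathlib

/-!
The coupling is built by processing the indices from the last one down to the first. Write
`z = p ∧ q`. At index `i` the mass `z i` is split into a part `zd i`, placed at the diagonal
position `(i, i)`, and a remainder `zr i`, which is fixed either in row `i` or in column `i`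
and waits for its other coordinate, to be chosen among the later-processed indices `j < i`.
The structure `PartialCoupling` records this situation, treating rows and columns symmetrically
through a Boolean.

Suppose `min (P i) (Q i)`, the minimum of the prefix sums before index `i`, is attained by the
side `b`. Then `zr i` is fixed on side `b`; all waiting remainders that lack a `b`-coordinate
receive the coordinate `i`, and these together with `z i` sum exactly to the marginal on side `b`.
On the other side one needs a set of waiting remainders whose sum `s` satisfies
`s ≤ t ≤ s + z i`, where `t` is the marginal to be filled. It exists by a greedy choice
(`exists_subset_sum_window`), because no waiting remainder exceeds `z i`: prefix sums of sorted
vectors are concave, so their minimum is concave and `z` is non-increasing (`glbVec_anti`).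

When all indices are processed no positive remainder is waiting, and the diagonal positions and
the positions `(j, k)`, `(k, j)` with `j < k` chosen for the remainders `zr k` are pairwise distinct
(the larger coordinate identifies `k`). Hence `∑ φ (M a b) = ∑ φ (zd k) + ∑ φ (zr k)` for every `φ`
with `φ 0 = 0` (`sum_pieceMatrix`), which gives the multiset identity, the bound `2n` and, by
concavity of `x ↦ -x log x` on each pair, the entropy bound.
-/

open Finset

/-- Sum of the first `i` components (0-indexed) of a vector; for `i ≥ n` this is the total
sum, which implements zero padding. -/
noncomputable def prefSum {n : ℕ} (p : Fin n → ℝ) (i : ℕ) : ℝ :=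
  ∑ k : Fin n, if (k : ℕ) < i then p k else 0

/-- Membership in `P_n`: sorted non-increasingly, nonnegative components, summing to 1. -/
def IsProbVec {n : ℕ} (p : Fin n → ℝ) : Prop :=
  (∀ i j : Fin n, i ≤ j → p j ≤ p i) ∧ (∀ i, 0 ≤ p i) ∧ (∑ i, p i) = 1

/-- Majorization `p ≼ q` (the shorter vector being padded with zeros). -/
def Maj {n m : ℕ} (p : Fin n → ℝ) (q : Fin m → ℝ) : Prop :=
  ∀ i : ℕ, prefSum p i ≤ prefSum q i
/-- The greatest lower bound `p ∧ q` in the majorization lattice `(P_n, ≼)`: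
`z₁ = min (p₁, q₁)` and `zᵢ = min (∑_{j≤i} pⱼ, ∑_{j≤i} qⱼ) − ∑_{j<i} zⱼ`, i.e. its prefix
sums are the minima of the corresponding prefix sums of `p` and `q`. -/
noncomputable def glbVec {n : ℕ} (p q : Fin n → ℝ) : Fin n → ℝ :=
  fun i => min (prefSum p ((i : ℕ) + 1)) (prefSum q ((i : ℕ) + 1)) -
    min (prefSum p (i : ℕ)) (prefSum q (i : ℕ))
/-- Shannon entropy (base-2 logarithm, with the convention `0 · log (1/0) = 0`). -/
noncomputable def H2 {n : ℕ} (p : Fin n → ℝ) : ℝ :=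
  ∑ i, -(p i * Real.logb 2 (p i))
/-- `M ∈ C(p,q)`: a coupling of `p` and `q`. -/
def IsCoupling {n m : ℕ} (M : Fin n → Fin m → ℝ) (p : Fin n → ℝ) (q : Fin m → ℝ) : Prop :=
  (∀ i j, 0 ≤ M i j) ∧ (∀ i, (∑ j, M i j) = p i) ∧ (∀ j, (∑ i, M i j) = q j)

/-- Shannon entropy of the vector of entries of a matrix. -/
noncomputable def H2mat {n m : ℕ} (M : Fin n → Fin m → ℝ) : ℝ :=
  ∑ i, ∑ j, -(M i j * Real.logb 2 (M i j))

/-! ### Prefix sums and the greatest lower bound -/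

lemma prefSum_zero {n : ℕ} (p : Fin n → ℝ) : prefSum p 0 = 0 := by
  simp [prefSum]

lemma prefSum_full {n : ℕ} (p : Fin n → ℝ) : prefSum p n = ∑ i, p i := by
  simp [prefSum]

lemma prefSum_succ_fin {n : ℕ} (p : Fin n → ℝ) (i : Fin n) :
    prefSum p ((i : ℕ) + 1) = prefSum p i + p i := by
  have : p i = ∑ k : Fin n, if k = i then p k else 0 := by simp
  rw [this]
  unfold prefSum
  rw [← Finset.sum_add_distrib]
  refine Finset.sum_congr rfl fun k _ => ?_
  have hk : k = i ↔ (k : ℕ) = i := Fin.ext_iff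
  rcases lt_trichotomy (k : ℕ) i with h | h | h
  · have h1 : (k : ℕ) < i + 1 := by omega
    have h2 : k ≠ i := by rw [Ne, hk]; omega
    simp [h, h1, h2]
  · have h2 : k = i := hk.2 h
    simp [h2]
  · have h1 : ¬ (k : ℕ) < i + 1 := by omega
    have h2 : k ≠ i := by rw [Ne, hk]; omega
    have h3 : ¬ (k : ℕ) < i := by omega
    simp [h1, h2, h3]

lemma prefSum_of_le {n : ℕ} (p : Fin n → ℝ) {i : ℕ} (h : n ≤ i) : prefSum p i = ∑ k, p k := by
  unfold prefSum
  refine Finset.sum_congr rfl fun k _ => ?_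
  rw [if_pos (lt_of_lt_of_le k.2 h)]

lemma prefSum_mono {n : ℕ} {p : Fin n → ℝ} (hp : IsProbVec p) (i : ℕ) :
    prefSum p i ≤ prefSum p (i + 1) := by
  by_cases h : i < n
  · have := prefSum_succ_fin p ⟨i, h⟩
    have := hp.2.1 ⟨i, h⟩
    simp only at *
    linarith
  · rw [prefSum_of_le p (by omega), prefSum_of_le p (by omega)]

lemma prefSum_concave {n : ℕ} {p : Fin n → ℝ} (hp : IsProbVec p) (i : ℕ) :
    prefSum p i + prefSum p (i + 2) ≤ 2 * prefSum p (i + 1) := by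
  by_cases h : i + 1 < n
  · have h1 := prefSum_succ_fin p ⟨i, by omega⟩
    have h2 := prefSum_succ_fin p ⟨i + 1, h⟩
    have := hp.1 ⟨i, by omega⟩ ⟨i + 1, h⟩ (by simp)
    simp only at *
    linarith
  · have := prefSum_mono hp i
    rw [prefSum_of_le p (i := i + 2) (by omega)]
    rw [prefSum_of_le p (i := i + 1) (by omega)] at *
    linarith

/-- The common prefix sum of `p ∧ q`. -/
noncomputable def minPref {n : ℕ} (p q : Fin n → ℝ) (i : ℕ) : ℝ :=
  min (prefSum p i) (prefSum q i)

lemma glbVec_eq {n : ℕ} (p q : Fin n → ℝ) (i : Fin n) :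
    glbVec p q i = minPref p q ((i : ℕ) + 1) - minPref p q i := rfl

lemma glbVec_nonneg {n : ℕ} {p q : Fin n → ℝ} (hp : IsProbVec p) (hq : IsProbVec q)
    (i : Fin n) : 0 ≤ glbVec p q i :=
  sub_nonneg.2 (min_le_min (prefSum_mono hp i) (prefSum_mono hq i))

lemma glbVec_anti {n : ℕ} {p q : Fin n → ℝ} (hp : IsProbVec p) (hq : IsProbVec q)
    {i j : Fin n} (hij : i ≤ j) : glbVec p q j ≤ glbVec p q i := by
  have key : Antitone fun i : ℕ => minPref p q (i + 1) - minPref p q i := by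
    refine antitone_nat_of_succ_le fun k => ?_
    have h1 := prefSum_concave hp k
    have h2 := prefSum_concave hq k
    simp only [minPref]
    have a1 := min_le_left (prefSum p k) (prefSum q k)
    have a2 := min_le_right (prefSum p k) (prefSum q k)
    have a3 := min_le_left (prefSum p (k + 2)) (prefSum q (k + 2))
    have a4 := min_le_right (prefSum p (k + 2)) (prefSum q (k + 2))
    rw [show k + 1 + 1 = k + 2 from rfl]
    rcases min_choice (prefSum p (k + 1)) (prefSum q (k + 1)) with h | h <;> rw [h] <;> linarith
  exact key hij

lemma sum_glbVec {n : ℕ} {p q : Fin n → ℝ} (hp : IsProbVec p) (hq : IsProbVec q) :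
    ∑ i, glbVec p q i = 1 := by
  simp only [glbVec_eq]
  rw [Fin.sum_univ_eq_sum_range (fun i => minPref p q (i + 1) - minPref p q i) n,
    Finset.sum_range_sub]
  simp [minPref, prefSum_zero, prefSum_full, hp.2.2, hq.2.2]

/-! ### The greedy construction -/

/-- Greedy selection: items of size at most `m` can reach any admissible target `t` up to a
slack of `m`. -/
lemma exists_subset_sum_window {ι : Type*} (w : ι → ℝ) (m t : ℝ) (ht : 0 ≤ t) (U : Finset ι)
    (hw : ∀ k ∈ U, w k ≤ m) (hU : t ≤ ∑ k ∈ U, w k + m) :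
    ∃ S ⊆ U, ∑ k ∈ S, w k ≤ t ∧ t ≤ ∑ k ∈ S, w k + m := by
  classical
  induction U using Finset.induction_on with
  | empty => exact ⟨∅, subset_rfl, by simpa using ht, hU⟩
  | insert a U ha ih =>
    by_cases h : t ≤ ∑ k ∈ U, w k + m
    · obtain ⟨S, hS, h1, h2⟩ := ih (fun k hk => hw k (Finset.mem_insert_of_mem hk)) h
      exact ⟨S, hS.trans (Finset.subset_insert _ _), h1, h2⟩
    · refine ⟨insert a U, subset_rfl, ?_, hU⟩
      rw [Finset.sum_insert ha]
      have := hw a (Finset.mem_insert_self _ _)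
      linarith

/-- State of the construction when the indices `≥ i` have been processed, for the marginals
`P true` (rows) and `P false` (columns). The mass `zd k` sits at `(k, k)`. The mass `zr k` has
`k` as its coordinate on side `side k`, and its coordinate on the other side is `l k`,
where `none` means that it is not yet chosen. The field `waiting` computes the total mass
lacking a coordinate on side `b`. -/
structure PartialCoupling {n : ℕ} (P : Bool → Fin n → ℝ) (i : ℕ) (zr zd : Fin n → ℝ)
    (side : Fin n → Bool) (l : Fin n → Option (Fin n)) : Prop where
  zr_nonneg : ∀ k, 0 ≤ zr k
  zd_nonneg : ∀ k, 0 ≤ zd k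
  add_eq : ∀ k : Fin n, i ≤ k → zr k + zd k = glbVec (P true) (P false) k
  zr_eq_zero : ∀ k : Fin n, (k : ℕ) < i → zr k = 0
  l_spec : ∀ k j, l k = some j → i ≤ j ∧ j < k
  marginal : ∀ b, ∀ j : Fin n, i ≤ j → P b j = zd j + (if side j = b then zr j else 0) +
    ∑ k, if side k ≠ b ∧ l k = some j then zr k else 0
  waiting : ∀ b, (∑ k, if side k ≠ b ∧ l k = none then zr k else 0) =
    prefSum (P b) i - minPref (P true) (P false) i

/-- Processing of one more index. -/
lemma PartialCoupling.step {n : ℕ} {P : Bool → Fin n → ℝ} (hP : ∀ b, IsProbVec (P b))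
    (i : Fin n) {zr zd : Fin n → ℝ} {side : Fin n → Bool} {l : Fin n → Option (Fin n)}
    (h : PartialCoupling P ((i : ℕ) + 1) zr zd side l) :
    ∃ zr zd side l, PartialCoupling P (i : ℕ) zr zd side l := by
  classical
  set z := glbVec (P true) (P false) with hz
  -- `b` is the side attaining the minimal prefix sum before `i`
  obtain ⟨b, hb⟩ : ∃ b, minPref (P true) (P false) i = prefSum (P b) i := by
    rcases min_choice (prefSum (P true) i) (prefSum (P false) i) with h | h
    · exact ⟨true, h⟩
    · exact ⟨false, h⟩
  have hmin : ∀ c, minPref (P true) (P false) i ≤ prefSum (P c) i := by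
    rintro (_ | _)
    · exact min_le_right _ _
    · exact min_le_left _ _
  have hzi : z i = minPref (P true) (P false) ((i : ℕ) + 1) - minPref (P true) (P false) i :=
    glbVec_eq _ _ _
  have hpre : ∀ c, prefSum (P c) ((i : ℕ) + 1) = prefSum (P c) i + P c i :=
    fun c => prefSum_succ_fin _ _
  have hzr0 : ∀ k, ¬ i < k → zr k = 0 := by
    intro k hk
    rw [Fin.lt_def] at hk
    exact h.zr_eq_zero k (by omega)
  have hli : l i = none := by
    by_contra hne
    obtain ⟨j, hj⟩ := Option.ne_none_iff_exists'.1 hne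
    have := h.l_spec i j hj
    have := Fin.lt_def.1 this.2
    omega
  have hzr_le : ∀ k, zr k ≤ z i := by
    intro k
    by_cases hk : (k : ℕ) < i + 1
    · rw [h.zr_eq_zero k hk]
      exact glbVec_nonneg (hP _) (hP _) i
    · have h1 := h.add_eq k (by omega)
      have h2 := h.zd_nonneg k
      have h3 := glbVec_anti (hP true) (hP false) (i := i) (j := k) (Fin.le_def.2 (by omega))
      linarith
  -- candidates for completion on the side other than `b`
  set U := Finset.univ.filter (fun k => side k ≠ !b ∧ l k = none ∧ i < k) with hU
  have hUsum : ∑ k ∈ U, zr k =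
      prefSum (P !b) ((i : ℕ) + 1) - minPref (P true) (P false) ((i : ℕ) + 1) := by
    rw [← h.waiting, hU, Finset.sum_filter]
    refine Finset.sum_congr rfl fun k _ => ?_
    by_cases hk : i < k
    · simp [hk]
    · simp [hk, hzr0 k hk]
  obtain ⟨S, hSU, hS1, hS2⟩ := exists_subset_sum_window zr (z i) (P (!b) i)
    ((hP _).2.1 i) U (fun k _ => hzr_le k) (by
      have := hmin (!b)
      have := hpre (!b)
      linarith)
  have hS : ∀ k ∈ S, side k = b ∧ l k = none ∧ i < k := by
    intro k hk
    have := hSU hk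
    simpa [hU] using this
  -- the remainders whose missing coordinate is now set to `i`
  set T := Finset.univ.filter (fun k => l k = none ∧ i < k ∧ (side k ≠ b ∨ k ∈ S)) with hT
  have hTmem : ∀ k, k ∈ T ↔ l k = none ∧ i < k ∧ (side k ≠ b ∨ k ∈ S) := by
    intro k; simp [hT]
  have hiT : i ∉ T := by simp [hTmem]
  have hσb : (∑ k, if side k ≠ b ∧ k ∈ T then zr k else 0) = P b i - z i := by
    have e : (∑ k, if side k ≠ b ∧ k ∈ T then zr k else 0) =
        ∑ k, if side k ≠ b ∧ l k = none then zr k else 0 := by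
      refine Finset.sum_congr rfl fun k _ => ?_
      by_cases hk : i < k
      · by_cases hs : side k = b <;> simp [hTmem, hk, hs]
      · simp [hzr0 k hk]
    rw [e, h.waiting, hzi, hb, hpre]
    ring
  have hσc : (∑ k, if side k ≠ !b ∧ k ∈ T then zr k else 0) = ∑ k ∈ S, zr k := by
    rw [← Finset.sum_filter]
    refine Finset.sum_congr ?_ fun _ _ => rfl
    ext k
    simp only [Finset.mem_filter, Finset.mem_univ, true_and, hTmem]
    constructor
    · rintro ⟨h1, -, -, h2 | h2⟩
      · exact absurd (by simpa using h1) h2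
      · exact h2
    · intro hk
      obtain ⟨h1, h2, h3⟩ := hS k hk
      exact ⟨by simp [h1], h2, h3, Or.inr hk⟩
  set d := P (!b) i - ∑ k ∈ S, zr k with hd
  have hd0 : 0 ≤ d := by linarith
  have hdz : d ≤ z i := by linarith
  refine ⟨Function.update zr i (z i - d), Function.update zd i d, Function.update side i b,
    fun k => if k ∈ T then some i else l k, ?_, ?_, ?_, ?_, ?_, ?_, ?_⟩
  · intro k
    by_cases hk : k = i
    · subst hk; simpa using hdz
    · simpa [hk] using h.zr_nonneg k
  · intro k
    by_cases hk : k = i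
    · subst hk; simpa using hd0
    · simpa [hk] using h.zd_nonneg k
  · intro k hik
    by_cases hk : k = i
    · subst hk; simp [hz]
    · have : (k : ℕ) ≠ i := fun e => hk (Fin.ext e)
      simpa [hk] using h.add_eq k (by omega)
  · intro k hik
    have hk : k ≠ i := by rintro rfl; omega
    simpa [hk] using h.zr_eq_zero k (by omega)
  · intro k j hkj
    by_cases hk : k ∈ T
    · simp only [hk, if_true, Option.some.injEq] at hkj
      subst hkj
      exact ⟨le_rfl, ((hTmem k).1 hk).2.1⟩
    · simp only [hk, if_false] at hkj
      have := h.l_spec k j hkj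
      exact ⟨by omega, this.2⟩
  · intro c j hij
    by_cases hj : j = i
    · subst hj
      have e : (∑ k, if Function.update side j b k ≠ c ∧
            (if k ∈ T then some j else l k) = some j
          then Function.update zr j (z j - d) k else 0) =
          ∑ k, if side k ≠ c ∧ k ∈ T then zr k else 0 := by
        refine Finset.sum_congr rfl fun k _ => ?_
        have hlk : l k ≠ some j := fun hl => by
          have := (h.l_spec k j hl).1
          omega
        by_cases hk : k = j
        · subst hk; simp [hiT, hlk]
        · by_cases hkT : k ∈ T <;> simp [hk, hkT, hlk]
      rw [e]
      by_cases hc : c = b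
      · subst hc
        rw [hσb]
        simp
      · have hc' : c = !b := by cases b <;> cases c <;> simp_all
        subst hc'
        rw [hσc]
        simp [hd]
    · have hne : (j : ℕ) ≠ i := fun e => hj (Fin.ext e)
      rw [h.marginal c j (by omega)]
      have e : (∑ k, if Function.update side i b k ≠ c ∧
            (if k ∈ T then some i else l k) = some j
          then Function.update zr i (z i - d) k else 0) =
          ∑ k, if side k ≠ c ∧ l k = some j then zr k else 0 := by
        refine Finset.sum_congr rfl fun k _ => ?_
        by_cases hk : k = i
        · subst hk; simp [hiT, hli]
        · by_cases hkT : k ∈ T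
          · simp [hk, hkT, ((hTmem k).1 hkT).1, Ne.symm hj]
          · simp [hk, hkT]
      rw [e]
      simp [hj]
  · intro c
    have e : (∑ k, if Function.update side i b k ≠ c ∧
          (if k ∈ T then some i else l k) = none
        then Function.update zr i (z i - d) k else 0) =
        (∑ k, if side k ≠ c ∧ l k = none then zr k else 0) -
          (∑ k, if side k ≠ c ∧ k ∈ T then zr k else 0) +
          ∑ k, if k = i then (if b ≠ c then z i - d else 0) else 0 := by
      rw [← Finset.sum_sub_distrib, ← Finset.sum_add_distrib]
      refine Finset.sum_congr rfl fun k _ => ?_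
      by_cases hk : k = i
      · subst hk; simp [hiT, hli, hzr0 k (lt_irrefl _)]
      · by_cases hkT : k ∈ T
        · simp [hk, hkT, ((hTmem k).1 hkT).1]
        · simp [hk, hkT]
    rw [e, h.waiting, Finset.sum_ite_eq' Finset.univ i, if_pos (Finset.mem_univ _), hpre]
    by_cases hc : c = b
    · subst hc
      rw [hσb]
      simp only [ne_eq, not_true_eq_false, if_false]
      linarith
    · have hc' : c = !b := by cases b <;> cases c <;> simp_all
      subst hc'
      rw [hσc, if_pos (by simp), hd]
      linarith

/-- All indices can be processed; at the end no positive remainder is waiting. -/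
lemma exists_complete {n : ℕ} {P : Bool → Fin n → ℝ} (hP : ∀ b, IsProbVec (P b)) :
    ∃ zr zd side l, PartialCoupling P 0 zr zd side l ∧ ∀ k, l k = none → zr k = 0 := by
  have main : ∃ zr zd side l, PartialCoupling P 0 zr zd side l := by
    refine Nat.decreasingInduction' (m := 0) (n := n)
      (P := fun i => ∃ zr zd side l, PartialCoupling P i zr zd side l) ?_ (Nat.zero_le _) ?_
    · rintro k hk - ⟨zr, zd, side, l, h⟩
      exact h.step hP ⟨k, hk⟩
    -- nothing is processed yet, and both prefix sums up to `n` equal `1`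
    · refine ⟨fun _ => 0, fun _ => 0, fun _ => true, fun _ => none, ?_, ?_, ?_, ?_, ?_, ?_, ?_⟩
      · simp
      · simp
      · intro k hk; exact absurd k.2 (by omega)
      · simp
      · simp
      · intro b k hk; exact absurd k.2 (by omega)
      · intro b
        simp [minPref, prefSum_full, (hP _).2.2]
  obtain ⟨zr, zd, side, l, h⟩ := main
  refine ⟨zr, zd, side, l, h, fun k hk => ?_⟩
  have hw := h.waiting (!side k)
  simp only [minPref, prefSum_zero, min_self, sub_zero] at hw
  rw [Finset.sum_eq_zero_iff_of_nonneg] at hw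
  · simpa [hk] using hw k (Finset.mem_univ _)
  · intro k _
    split_ifs
    · exact h.zr_nonneg k
    · exact le_rfl

/-! ### The matrix -/

/-- The matrix carrying `zd k` at `(k, k)`, and `zr k` at `(k, l k)` if `side k = true`, at
`(l k, k)` if `side k = false`; a remainder with `l k = none` is not placed. -/
noncomputable def pieceMatrix {n : ℕ} (zr zd : Fin n → ℝ) (side : Fin n → Bool)
    (l : Fin n → Option (Fin n)) (a b : Fin n) : ℝ :=
  (if a = b then zd a else 0) + (if side b ≠ true ∧ l b = some a then zr b else 0) +
    (if side a = true ∧ l a = some b then zr a else 0)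

section pieceMatrix

variable {n : ℕ} {zr zd : Fin n → ℝ} {side : Fin n → Bool} {l : Fin n → Option (Fin n)}

/-- At most one of the three summands of an entry is present: the pieces occupy distinct
positions. -/
lemma map_pieceMatrix (hl : ∀ k j, l k = some j → j < k) (φ : ℝ → ℝ) (hφ : φ 0 = 0)
    (a b : Fin n) :
    φ (pieceMatrix zr zd side l a b) =
      (if a = b then φ (zd a) else 0) + (if side b ≠ true ∧ l b = some a then φ (zr b) else 0) +
        (if side a = true ∧ l a = some b then φ (zr a) else 0) := by
  unfold pieceMatrix
  by_cases h1 : a = b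
  · subst h1
    have : l a ≠ some a := fun h => lt_irrefl _ (hl _ _ h)
    simp [this]
  · by_cases h2 : side b ≠ true ∧ l b = some a
    · have h3 : ¬ (side a = true ∧ l a = some b) := fun h =>
        lt_asymm (hl _ _ h2.2) (hl _ _ h.2)
      rw [if_neg h1, if_pos h2, if_neg h3, if_neg h1, if_pos h2, if_neg h3]
      simp
    · rw [if_neg h1, if_neg h2, if_neg h1, if_neg h2]
      split_ifs <;> simp [hφ]

/-- A remainder, if placed at all, contributes exactly once along the line that it is fixed on. -/
lemma sum_ite_eq_some (l : Option (Fin n)) (c : Prop) [Decidable c] (x : ℝ)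
    (hx : l = none → x = 0) :
    (∑ j, if c ∧ l = some j then x else 0) = if c then x else 0 := by
  cases l with
  | none => simp [hx rfl]
  | some m => by_cases hc : c <;> simp [hc]

/-- Any function vanishing at `0` has the same sum over the matrix as over the pieces. -/
lemma sum_pieceMatrix (hl : ∀ k j, l k = some j → j < k) (h0 : ∀ k, l k = none → zr k = 0)
    (φ : ℝ → ℝ) (hφ : φ 0 = 0) :
    ∑ a, ∑ b, φ (pieceMatrix zr zd side l a b) = ∑ k, φ (zd k) + ∑ k, φ (zr k) := by
  have h0' : ∀ k, l k = none → φ (zr k) = 0 := fun k hk => by rw [h0 k hk, hφ]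
  simp only [map_pieceMatrix hl φ hφ, Finset.sum_add_distrib]
  rw [Finset.sum_comm (f := fun a b => if side b ≠ true ∧ l b = some a then φ (zr b) else 0)]
  simp only [sum_ite_eq_some _ _ _ (h0' _)]
  simp only [Finset.sum_ite_eq, Finset.mem_univ, if_true, add_assoc]
  rw [← Finset.sum_add_distrib]
  congr 1
  refine Finset.sum_congr rfl fun k _ => ?_
  cases side k <;> simp

lemma card_pieceMatrix (hl : ∀ k j, l k = some j → j < k) (h0 : ∀ k, l k = none → zr k = 0)
    (Q : ℝ → Prop) [DecidablePred Q] (hQ : ¬ Q 0) :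
    (Finset.univ.filter (fun ij : Fin n × Fin n => Q (pieceMatrix zr zd side l ij.1 ij.2))).card =
      (Finset.univ.filter (fun j : Fin n => Q (zr j))).card +
        (Finset.univ.filter (fun j : Fin n => Q (zd j))).card := by
  have := sum_pieceMatrix (zd := zd) (side := side) hl h0 (fun x => if Q x then 1 else 0)
    (by simp [hQ])
  rw [← Fintype.sum_prod_type'] at this
  simp only [Finset.sum_boole] at this
  rw [add_comm]
  exact_mod_cast this

end pieceMatrix

/-! ### Entropy and the coupling -/

/-- Splitting a mass in two raises the entropy contribution by at most the mass (in bits). -/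
lemma entropy_split_le {a b : ℝ} (ha : 0 ≤ a) (hb : 0 ≤ b) :
    -(a * Real.logb 2 a) + -(b * Real.logb 2 b) ≤
      -((a + b) * Real.logb 2 (a + b)) + (a + b) := by
  rcases (add_nonneg ha hb).eq_or_lt with h | h
  · have h1 : a = 0 := by linarith
    have h2 : b = 0 := by linarith
    simp [h1, h2]
  · have hl : 0 < Real.log 2 := Real.log_pos (by norm_num)
    have hc := Real.convexOn_mul_log.2 (Set.mem_Ici.2 ha) (Set.mem_Ici.2 hb)
      (show (0 : ℝ) ≤ 1 / 2 by norm_num) (show (0 : ℝ) ≤ 1 / 2 by norm_num) (by norm_num)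
    simp only [smul_eq_mul] at hc
    rw [← mul_add, show (1 / 2 : ℝ) * (a + b) = (a + b) / 2 by ring,
      Real.log_div h.ne' (by norm_num)] at hc
    have key : (a + b) * Real.log (a + b) - (a + b) * Real.log 2 ≤
        a * Real.log a + b * Real.log b := by linarith
    simp only [Real.logb]
    have := div_le_div_of_nonneg_right key hl.le
    rw [sub_div, add_div, mul_div_assoc, mul_div_assoc, mul_div_assoc, mul_div_assoc,
      div_self hl.ne'] at this
    linarith

/-- for `p, q ∈ P_n` with greatest lower bound `z = p ∧ q`, there is a coupling
`M ∈ C(p,q)` whose nonzero entries can be partitioned into `n` pairs `{zr j, zd j}` with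
`zr j + zd j = z j` (expressed here by saying that the multiset of nonzero entries of `M`
coincides with the multiset of nonzero values among the `zr j`'s and `zd j`'s); in particular
`M` has at most `2n` nonzero entries and satisfies `H(M) ≤ H(p ∧ q) + 1`. -/
theorem exists_sparse_coupling {n : ℕ} (p q : Fin n → ℝ)
    (hp : IsProbVec p) (hq : IsProbVec q) :
    ∃ M : Fin n → Fin n → ℝ, IsCoupling M p q ∧
      (∃ zr zd : Fin n → ℝ, (∀ j, 0 ≤ zr j) ∧ (∀ j, 0 ≤ zd j) ∧
        (∀ j, zr j + zd j = glbVec p q j) ∧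
        (∀ x : ℝ, x ≠ 0 →
          (Finset.univ.filter (fun ij : Fin n × Fin n => M ij.1 ij.2 = x)).card =
            (Finset.univ.filter (fun j : Fin n => zr j = x)).card +
              (Finset.univ.filter (fun j : Fin n => zd j = x)).card)) ∧
      (Finset.univ.filter (fun ij : Fin n × Fin n => M ij.1 ij.2 ≠ 0)).card ≤ 2 * n ∧
      H2mat M ≤ H2 (glbVec p q) + 1 := by
  obtain ⟨zr, zd, side, l, h, h0⟩ := exists_complete
    (P := fun b => if b then p else q) (fun b => by cases b <;> simpa)
  have hl : ∀ k j, l k = some j → j < k := fun k j hkj => (h.l_spec k j hkj).2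
  have hz : ∀ j, zr j + zd j = glbVec p q j := fun j => by
    simpa using h.add_eq j (Nat.zero_le _)
  have hrow : ∀ j, p j = _ := fun j => by simpa using h.marginal true j (Nat.zero_le _)
  have hcol : ∀ j, q j = _ := fun j => by simpa using h.marginal false j (Nat.zero_le _)
  refine ⟨pieceMatrix zr zd side l, ⟨?_, ?_, ?_⟩,
    ⟨zr, zd, h.zr_nonneg, h.zd_nonneg, hz, ?_⟩, ?_, ?_⟩
  · intro i j
    have := h.zr_nonneg i
    have := h.zr_nonneg j
    have := h.zd_nonneg i
    unfold pieceMatrix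
    split_ifs <;> linarith
  · intro a
    rw [hrow a]
    simp only [pieceMatrix, Finset.sum_add_distrib]
    rw [sum_ite_eq_some _ _ _ (h0 a)]
    simp
    ring
  · intro b
    rw [hcol b]
    simp only [pieceMatrix, Finset.sum_add_distrib]
    rw [sum_ite_eq_some _ _ _ (h0 b)]
    simp
  · intro x hx
    exact card_pieceMatrix hl h0 (fun y => y = x) (fun e => hx e.symm)
  · rw [card_pieceMatrix hl h0 (fun y => y ≠ 0) (by simp), two_mul]
    refine Nat.add_le_add ?_ ?_ <;>
      exact (Finset.card_filter_le _ _).trans (by simp)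
  · have e := sum_pieceMatrix (zd := zd) (side := side) hl h0
      (fun x => -(x * Real.logb 2 x)) (by simp)
    unfold H2mat H2
    rw [e, ← sum_glbVec hp hq, ← Finset.sum_add_distrib, ← Finset.sum_add_distrib]
    refine Finset.sum_le_sum fun k _ => ?_
    rw [← hz k, add_comm (zr k)]
    exact entropy_split_le (h.zd_nonneg k) (h.zr_nonneg k)
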